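/- Let E → M be a Lie algebroid equipped with a higher Poisson structure 𝒫 ∈ C^∞(ΠE*). Then the function 𝓗_𝒫 := {S, 𝒫}_{T*(ΠE*)} ∈ C^∞(T*(ΠE*)) satisfies {S, 𝓗_𝒫}_{T*(ΠE*)} = 0 and {𝓗_𝒫, 𝓗_𝒫}_{T*(ΠE*)} = 0; consequently 𝓗_𝒫 is the linear Hamiltonian of a homological vector field Q_𝒫 = −⟦𝒫, ·⟧_S ∈ Vect(ΠE*), so that E* → M is an L_∞-algebroid. -/

import Mathlib

/-!
The Hamiltonian `H = {S, P}` is odd. The graded Jacobi identity on `S, S, P` gives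
`2 {S, {S, P}} = ± {P, {S, S}} = 0`, and on `H, S, P` it expresses `{H, {S, P}} = {H, H}` through
`{P, H}`, which is the vanishing `⟦P, P⟧_S` up to sign, and `{H, S}`, which is the first
identity. After embedding `B` in `A` by `ι`, the operation `⟦P, ·⟧_S` becomes `-{H, ·}`, so the
Leibniz rule for `{H, ·}` makes it a derivation, and the oddness of `H` makes it odd. It squares to
zero because `2 {H, {H, x}} = ± {x, {H, H}}`, again by Jacobi. This last identity and the parity
statement are available only for homogeneous elements; they extend to all elements since every
element is the sum of an even and an odd one.
-/

noncomputable section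

/-- The sign `(-1)^p` attached to a parity `p ∈ ℤ₂`. -/
def pSign (p : ZMod 2) : ℝ := if p = 0 then 1 else -1

/-- `a` is homogeneous of Grassmann parity `p` with respect to the parity involution `σ`. -/
def IsHomog {A : Type*} [Ring A] [Algebra ℝ A] (σ : A →ₐ[ℝ] A) (p : ZMod 2) (a : A) : Prop :=
  σ a = pSign p • a

/-- An (even, `ε = 0`, Poisson) or (odd, `ε = 1`, Schouten) super bracket on a
supercommutative algebra `A` whose parity is encoded by the involution `σ`. -/
structure SuperBracket (A : Type*) [Ring A] [Algebra ℝ A] (σ : A →ₐ[ℝ] A) (ε : ZMod 2) where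
  br : A → A → A
  add_left : ∀ a b c, br (a + b) c = br a c + br b c
  add_right : ∀ a b c, br a (b + c) = br a b + br a c
  smul_left : ∀ (t : ℝ) (a b : A), br (t • a) b = t • br a b
  smul_right : ∀ (t : ℝ) (a b : A), br a (t • b) = t • br a b
  parity : ∀ (p q : ZMod 2) (a b : A), IsHomog σ p a → IsHomog σ q b →
    IsHomog σ (p + q + ε) (br a b)
  symm : ∀ (p q : ZMod 2) (a b : A), IsHomog σ p a → IsHomog σ q b →
    br a b = -(pSign ((p + ε) * (q + ε)) • br b a)
  leibniz : ∀ (p q : ZMod 2) (a b c : A), IsHomog σ p a → IsHomog σ q b →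
    br a (b * c) = br a b * c + pSign ((p + ε) * q) • (b * br a c)
  jacobi : ∀ (p q r : ZMod 2) (a b c : A), IsHomog σ p a → IsHomog σ q b → IsHomog σ r c →
    pSign ((p + ε) * (r + ε)) • br a (br b c)
      + pSign ((q + ε) * (p + ε)) • br b (br c a)
      + pSign ((r + ε) * (q + ε)) • br c (br a b) = 0

@[simp] lemma pSign_zero : pSign 0 = 1 := by simp [pSign]

@[simp] lemma pSign_one : pSign 1 = -1 := by simp [pSign]

lemma pSign_mul_self (p : ZMod 2) : pSign p * pSign p = 1 := by
  unfold pSign; split_ifs <;> norm_num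

lemma exists_even_add_odd {A : Type*} [Ring A] [Algebra ℝ A] {σ : A →ₐ[ℝ] A}
    (hσ : ∀ a, σ (σ a) = a) (a : A) :
    ∃ x y, IsHomog σ 0 x ∧ IsHomog σ 1 y ∧ a = x + y := by
  refine ⟨(1 / 2 : ℝ) • (a + σ a), (1 / 2 : ℝ) • (a - σ a), ?_, ?_, ?_⟩
  · simp [IsHomog, hσ, add_comm]
  · simp [IsHomog, hσ, ← smul_neg]
  · module

namespace SuperBracket

variable {A : Type*} [Ring A] [Algebra ℝ A] {σ : A →ₐ[ℝ] A}

lemma br_zero {ε : ZMod 2} (pb : SuperBracket A σ ε) (a : A) : pb.br a 0 = 0 := by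
  simpa using pb.smul_right 0 a 0

lemma br_neg {ε : ZMod 2} (pb : SuperBracket A σ ε) (a b : A) : pb.br a (-b) = -pb.br a b := by
  simpa using pb.smul_right (-1) a b

/-- The adjoint action of an odd function is an odd operator. -/
lemma parity_br_odd (pb : SuperBracket A σ 0) (hσ : ∀ a, σ (σ a) = a) {h : A}
    (hh : IsHomog σ 1 h) (x : A) : σ (pb.br h x) = -pb.br h (σ x) := by
  obtain ⟨x, y, hx, hy, rfl⟩ := exists_even_add_odd hσ x
  have h0 : σ (pb.br h x) = -pb.br h x := by simpa [IsHomog] using pb.parity 1 0 h x hh hx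
  have h1 : σ (pb.br h y) = pb.br h y := by
    simpa [IsHomog, show (1 + 1 : ZMod 2) = 0 from rfl] using pb.parity 1 1 h y hh hy
  have hx' : σ x = x := by simpa [IsHomog] using hx
  have hy' : σ y = -y := by simpa [IsHomog] using hy
  simp only [pb.add_right, map_add, h0, h1, hx', hy', br_neg]
  abel

/-- For odd `h`, the Jacobi identity on `h, h, x` reads `2 {h, {h, x}} = ± {x, {h, h}}`, so the
adjoint action of a solution of the master equation squares to zero. -/
lemma br_br_eq_zero (pb : SuperBracket A σ 0) (hσ : ∀ a, σ (σ a) = a) {h : A}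
    (hh : IsHomog σ 1 h) (hm : pb.br h h = 0) (x : A) : pb.br h (pb.br h x) = 0 := by
  have key : ∀ (r : ZMod 2) (x : A), IsHomog σ r x → pb.br h (pb.br h x) = 0 := by
    intro r x hx
    have j := pb.jacobi 1 1 r h h x hh hh hx
    rw [hm, br_zero, pb.symm r 1 x h hx hh] at j
    simp only [add_zero, one_mul, mul_one, smul_zero, pSign_one, br_neg, pb.smul_right] at j
    have j2 : (2 * pSign r) • pb.br h (pb.br h x) = 0 := by
      rw [← j]; module
    have hp := pSign_mul_self r
    exact (smul_eq_zero.mp j2).resolve_left fun h0 => by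
      have : pSign r = 0 := by linarith
      simp [this] at hp
  obtain ⟨x, y, hx, hy, rfl⟩ := exists_even_add_odd hσ x
  rw [pb.add_right, pb.add_right, key 0 x hx, key 1 y hy, add_zero]

/-- Jacobi on `h, s, p` for `h = {s, p}`: the Hamiltonian `h` commutes with itself as soon as it
commutes with both `s` and `p`. -/
lemma hamiltonian_br_self (pb : SuperBracket A σ 0) {s p : A} (hs : IsHomog σ 1 s)
    (hp : IsHomog σ 0 p) (hsh : pb.br s (pb.br s p) = 0) (hhp : pb.br (pb.br s p) p = 0) :
    pb.br (pb.br s p) (pb.br s p) = 0 := by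
  have hh : IsHomog σ 1 (pb.br s p) := by simpa using pb.parity 1 0 s p hs hp
  have e1 : pb.br p (pb.br s p) = 0 := by simp [pb.symm 0 1 _ _ hp hh, hhp]
  have e2 : pb.br (pb.br s p) s = 0 := by simp [pb.symm 1 1 _ _ hh hs, hsh]
  simpa [e1, e2, br_zero] using pb.jacobi 1 1 0 _ s p hh hs hp

end SuperBracket

/-- Let `E → M` be a Lie algebroid equipped with a higher Poisson
structure `𝒫 ∈ C^∞(ΠE*)`.  Then the function `𝓗_𝒫 := {S, 𝒫}_{T*(ΠE*)} ∈ C^∞(T*(ΠE*))`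
satisfies `{S, 𝓗_𝒫}_{T*(ΠE*)} = 0` and `{𝓗_𝒫, 𝓗_𝒫}_{T*(ΠE*)} = 0`; consequently `𝓗_𝒫`
is the linear Hamiltonian of a homological vector field `Q_𝒫 = -⟦𝒫, ·⟧_S ∈ Vect(ΠE*)`,
so that `E* → M` is an `L_∞`-algebroid.

Model: `A = C^∞(T*(ΠE*))` with parity involution `σA` and canonical Poisson bracket `pb`
(`ε = 0`); `B = C^∞(ΠE*)` with parity involution `σB`, included in `A` by the injective
algebra morphism `ι` (pullback along `T*(ΠE*) → ΠE*`).  The Lie algebroid structure is the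
odd, weight minus one, function `S ∈ A` with `{S,S} = 0`.  The associated Schouten bracket
on `B` is the derived bracket `⟦X,Y⟧_S = (-1)^{X̃+1}{{S,X},Y}` (hypothesis `hsb`).  A
higher Poisson structure is an even `𝒫 ∈ B` with `⟦𝒫,𝒫⟧_S = 0` (no homogeneity in weight
is assumed).  An `L_∞`-algebroid structure on `E* → M` is a homological vector field
(possibly inhomogeneous in weight) on `ΠE*`, i.e. an odd super-derivation of `B` squaring
to zero; the conclusion exhibits `Q_𝒫 = -⟦𝒫,·⟧_S` as such. -/
theorem higher_poisson_structure_gives_Linfty_algebroid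
    (A B : Type*) [Ring A] [Algebra ℝ A] [Ring B] [Algebra ℝ B]
    (σA : A →ₐ[ℝ] A) (σB : B →ₐ[ℝ] B)
    (hσA : ∀ a, σA (σA a) = a) (hσB : ∀ b, σB (σB b) = b)
    -- the canonical Poisson bracket on C^∞(T*(ΠE*))
    (pb : SuperBracket A σA 0)
    -- ι : C^∞(ΠE*) → C^∞(T*(ΠE*)), an injective parity-preserving algebra morphism
    (ι : B →ₐ[ℝ] A) (hι : Function.Injective ι)
    (hισ : ∀ b, ι (σB b) = σA (ι b))
    -- the odd weight minus one Schouten structure S encoding the Lie algebroid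
    (S : A) (hSodd : IsHomog σA 1 S) (hmaster : pb.br S S = 0)
    -- the derived Schouten bracket ⟦X,Y⟧_S = (-1)^{X̃+1}{{S,X},Y} on C^∞(ΠE*)
    (sb : B → B → B)
    (hsb : ∀ (q : ZMod 2) (X Y : B), IsHomog σB q X →
      ι (sb X Y) = (-(pSign q)) • pb.br (pb.br S (ι X)) (ι Y))
    -- the higher Poisson structure: even, with ⟦𝒫,𝒫⟧_S = 0
    (P : B) (hPeven : IsHomog σB 0 P) (hhigherPoisson : sb P P = 0) :
    -- {S, 𝓗_𝒫} = 0
    pb.br S (pb.br S (ι P)) = 0 ∧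
    -- {𝓗_𝒫, 𝓗_𝒫} = 0
    pb.br (pb.br S (ι P)) (pb.br S (ι P)) = 0 ∧
    -- Q_𝒫 = -⟦𝒫,·⟧_S is an odd vector field (super-derivation) on ΠE* …
    (∀ (q : ZMod 2) (X Y : B), IsHomog σB q X →
      sb P (X * Y) = sb P X * Y + pSign q • (X * sb P Y)) ∧
    (∀ X : B, σB (sb P X) = -(sb P (σB X))) ∧
    -- … which is homological, so E* → M is an L_∞-algebroid
    (∀ X : B, sb P (sb P X) = 0) := by
  have hP : IsHomog σA 0 (ι P) := by
    have h : σB P = P := by simpa [IsHomog] using hPeven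
    simp [IsHomog, ← hισ, h]
  have hH : IsHomog σA 1 (pb.br S (ι P)) := by simpa using pb.parity 1 0 S _ hSodd hP
  have hQ : ∀ X, ι (sb P X) = -pb.br (pb.br S (ι P)) (ι X) := fun X => by
    simpa using hsb 0 P X hPeven
  have hSH : pb.br S (pb.br S (ι P)) = 0 := pb.br_br_eq_zero hσA hSodd hmaster _
  have hHP : pb.br (pb.br S (ι P)) (ι P) = 0 := by
    simpa [hhigherPoisson] using (hQ P).symm
  have hHH := pb.hamiltonian_br_self hSodd hP hSH hHP
  refine ⟨hSH, hHH, fun q X Y hX => hι ?_, fun X => hι ?_, fun X => hι ?_⟩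
  · have hX' : IsHomog σA q (ι X) := by
      have h : σB X = pSign q • X := hX
      simp [IsHomog, ← hισ, h]
    simp only [hQ, map_add, map_mul, map_smul, pb.leibniz 1 q _ _ _ hH hX', add_zero, one_mul,
      neg_mul, mul_neg, smul_neg, neg_add]
  · simp only [hισ, hQ, map_neg, pb.parity_br_odd hσA hH]
  · simp only [hQ, pb.br_neg, pb.br_br_eq_zero hσA hH hHH, neg_zero, map_zero]

end
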